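/- Let p, q > 0 and a ∈ ℝ, and let Δ_a be the Laplacian with vertical drift a on Sol(p,q). Then every bounded C² function h : ℝ³ → ℝ with Δ_a h = 0 is constant, if and only if a = 0. (That is, Δ_a has the weak Liouville property precisely when the drift a vanishes.) -/

import Mathlib

open Real

/-- The Laplacian with vertical drift `a` on `Sol(p,q) ≡ ℝ³`:
`Δ_a f = (1/2)(e^{2pz} f_xx + e^{−2qz} f_yy + f_zz) + a f_z`. -/
noncomputable def solLap (p q a : ℝ) (f : ℝ × ℝ × ℝ → ℝ) (w : ℝ × ℝ × ℝ) : ℝ :=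
  (1/2) * (Real.exp (2*p*w.2.2) * iteratedDeriv 2 (fun t => f (t, w.2.1, w.2.2)) w.1
    + Real.exp (-(2*q*w.2.2)) * iteratedDeriv 2 (fun t => f (w.1, t, w.2.2)) w.2.1
    + iteratedDeriv 2 (fun t => f (w.1, w.2.1, t)) w.2.2)
  + a * deriv (fun t => f (w.1, w.2.1, t)) w.2.2

/-- The hyperbolic Laplacian with drift `b` on the logarithmic model `H(r) ≡ ℝ²`:
`Δ^{H(r)}_b g = (1/2)(e^{2rz} g_xx + g_zz) + b g_z`. -/
noncomputable def hypLap (r b : ℝ) (g : ℝ × ℝ → ℝ) (w : ℝ × ℝ) : ℝ :=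
  (1/2) * (Real.exp (2*r*w.2) * iteratedDeriv 2 (fun t => g (t, w.2)) w.1
    + iteratedDeriv 2 (fun t => g (w.1, t)) w.2)
  + b * deriv (fun t => g (w.1, t)) w.2

/-- Membership in `H⁺(Δ_a, λ)` on `Sol(p,q)`: strictly positive `C²` `λ`-eigenfunction. -/
def IsSolEigen (p q a lam : ℝ) (h : ℝ × ℝ × ℝ → ℝ) : Prop :=
  ContDiff ℝ 2 h ∧ (∀ w, 0 < h w) ∧ ∀ w, solLap p q a h w = lam * h w

/-- A minimal element of `H⁺(Δ_a, λ)` on `Sol(p,q)`: value `1` at the origin, and any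
element of `H⁺(Δ_a, λ)` dominated by it is a constant multiple of it. -/
def IsSolMinimal (p q a lam : ℝ) (h : ℝ × ℝ × ℝ → ℝ) : Prop :=
  IsSolEigen p q a lam h ∧ h (0, 0, 0) = 1 ∧
    ∀ f, IsSolEigen p q a lam f → (∀ w, f w ≤ h w) → ∃ c : ℝ, ∀ w, f w = c * h w

/-- Membership in `H⁺(Δ^{H(r)}_b, λ)`: strictly positive `C²` `λ`-eigenfunction. -/
def IsHypEigen (r b lam : ℝ) (g : ℝ × ℝ → ℝ) : Prop :=
  ContDiff ℝ 2 g ∧ (∀ w, 0 < g w) ∧ ∀ w, hypLap r b g w = lam * g w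

/-- A minimal element of `H⁺(Δ^{H(r)}_b, λ)`. -/
def IsHypMinimal (r b lam : ℝ) (g : ℝ × ℝ → ℝ) : Prop :=
  IsHypEigen r b lam g ∧ g (0, 0) = 1 ∧
    ∀ f, IsHypEigen r b lam f → (∀ w, f w ≤ g w) → ∃ c : ℝ, ∀ w, f w = c * g w

/-!
The group `Sol(p,q)` projects onto the two hyperbolic planes `H(p)` and `H(q)` by
`(x, y, z) ↦ (x, z)` and `(x, y, z) ↦ (y, -z)`, and `Δ_a` projects to their Laplacians with drift
`a` and `-a`.

If `a < 0`, a function `F` of `p x e^{-pz}` alone is harmonic when `F'` is a power of `1 + t²`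
whose exponent is below `-1/2` precisely because `a < 0`. Its primitive is therefore bounded, and
not constant. If `a > 0`, the same works on the other hyperbolic plane.

If `a = 0`, each half-plane `{x ≥ 0}` of `H(r)` carries a proper positive strictly superharmonic
function. Hence a bounded harmonic function which is nonpositive on the boundary of a half-plane of
`H(r)`, or of a quadrant `{x ≥ 0, y ≥ 0}` of `Sol(p,q)`, is nonpositive throughout. For `h` bounded
and harmonic, the double antisymmetrisation of `h` under a reflection in `x` and a reflection in `y`
vanishes on the faces of a quadrant, hence identically. So `h(c + x, y, z) - h(c - x, y, z)` does
not depend on `y`: it is a bounded harmonic function on `H(p)` vanishing on `{x = 0}`, hence zero.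
Thus `h` does not depend on `x`, nor, by symmetry, on `y`, and a bounded affine function of `z` is
constant.
-/

open Filter Topology Set

/-! ### Functions of one real variable -/

theorem iteratedDeriv_two_eq_of_hasDerivAt {f f' : ℝ → ℝ} {x c : ℝ}
    (hf : ∀ t, HasDerivAt f (f' t) t) (hf' : HasDerivAt f' c x) : iteratedDeriv 2 f x = c := by
  have hderiv : deriv f = f' := funext fun t => (hf t).deriv
  rw [iteratedDeriv_succ, iteratedDeriv_one, hderiv, hf'.deriv]

theorem iteratedDeriv_two_nonpos_of_isLocalMax {f : ℝ → ℝ} {x : ℝ} (h : IsLocalMax f x)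
    (hf : ContinuousAt f x) : iteratedDeriv 2 f x ≤ 0 := by
  rw [iteratedDeriv_succ, iteratedDeriv_one]
  by_contra! hpos
  have hmin := isLocalMin_of_deriv_deriv_pos hpos h.deriv_eq_zero hf
  have hconst : f =ᶠ[𝓝 x] fun _ => f x := by
    filter_upwards [h, hmin] with t hle hge using le_antisymm hle hge
  exact hpos.ne' (by simpa using hconst.deriv.deriv_eq)

theorem iteratedDeriv_two_le_of_isLocalMax_sub {u v : ℝ → ℝ} {x : ℝ} (hu : ContDiff ℝ 2 u)
    (hv : ContDiff ℝ 2 v) (h : IsLocalMax (fun t => u t - v t) x) :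
    iteratedDeriv 2 u x ≤ iteratedDeriv 2 v x := by
  have hle := iteratedDeriv_two_nonpos_of_isLocalMax h (hu.sub hv).continuous.continuousAt
  rwa [iteratedDeriv_fun_sub hu.contDiffAt hv.contDiffAt, sub_nonpos] at hle

theorem deriv_eq_of_isLocalMax_sub {u v : ℝ → ℝ} {x : ℝ} (hu : DifferentiableAt ℝ u x)
    (hv : DifferentiableAt ℝ v x) (h : IsLocalMax (fun t => u t - v t) x) :
    deriv u x = deriv v x := by
  rw [← sub_eq_zero, ← deriv_fun_sub hu hv, h.deriv_eq_zero]

theorem eq_of_iteratedDeriv_two_eq_zero_of_abs_le {g : ℝ → ℝ} {C : ℝ} (hg : ContDiff ℝ 2 g)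
    (hg₂ : ∀ t, iteratedDeriv 2 g t = 0) (hC : ∀ t, |g t| ≤ C) (s t : ℝ) : g s = g t := by
  have hd' : Differentiable ℝ (deriv g) := by
    simpa using hg.differentiable_iteratedDeriv' 1
  have hslope : ∀ r, HasDerivAt g (deriv g 0) r := fun r => by
    have hconst := is_const_of_deriv_eq_zero hd'
      (fun x => by simpa [iteratedDeriv_succ] using hg₂ x) r 0
    exact hconst ▸ (hg.differentiable (by norm_num) r).hasDerivAt
  have haffine : ∀ r, g r = g 0 + deriv g 0 * r := fun r => by
    have hder : ∀ x, HasDerivAt (fun x => g x - deriv g 0 * x) 0 x := fun x => by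
      simpa using (hslope x).fun_sub ((hasDerivAt_id' x).const_mul (deriv g 0))
    have := is_const_of_deriv_eq_zero (fun x => (hder x).differentiableAt)
      (fun x => (hder x).deriv) r 0
    linarith
  have hzero : deriv g 0 = 0 := by
    by_contra hne
    have h₀ := abs_le.1 (hC 0)
    have h₁ := abs_le.1 (hC ((2 * C + 1) / deriv g 0))
    rw [haffine, mul_div_cancel₀ _ hne] at h₁
    linarith
  rw [haffine s, haffine t, hzero, zero_mul, zero_mul]

theorem eq_of_forall_reflection {α : Type*} {f : ℝ → α} (h : ∀ c t, f (c + t) = f (c - t))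
    (x x' : ℝ) : f x = f x' := by
  convert h ((x + x') / 2) ((x - x') / 2) using 2 <;> ring

theorem log_le_arsinh {s : ℝ} (hs : 0 < s) : log s ≤ arsinh s := by
  rw [log_le_iff_le_exp hs, exp_arsinh]
  exact le_add_of_nonneg_right (sqrt_nonneg _)

/-! ### A maximum principle -/

/-- A Phragmén–Lindelöf principle: `φ` is proper on `S`, and `hmax` is what the strict
superharmonicity of `φ` yields away from the part of the boundary where `u ≤ 0` is known. -/
theorem nonpos_of_proper_barrier {E : Type*} [TopologicalSpace E] {S : Set E} (hS : IsClosed S)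
    {u φ : E → ℝ} (hu : ContinuousOn u S) (hφ : ContinuousOn φ S) {C : ℝ} (hC : ∀ w ∈ S, u w ≤ C)
    (hφ₀ : ∀ w ∈ S, 0 ≤ φ w) (hK : ∀ M, ∃ K, IsCompact K ∧ ∀ w ∈ S, φ w ≤ M → w ∈ K)
    (hmax : ∀ ε > 0, ∀ w ∈ S, 0 < u w → ¬ IsMaxOn (fun w => u w - ε * φ w) S w)
    {w : E} (hw : w ∈ S) : u w ≤ 0 := by
  by_contra! hpos
  have hφw := hφ₀ w hw
  obtain ⟨ε, hε, hεw⟩ : ∃ ε > 0, ε * φ w < u w :=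
    ⟨u w / (φ w + 1), by positivity, by rw [div_mul_eq_mul_div, div_lt_iff₀] <;> nlinarith⟩
  have hfar : ∀ᶠ w' in cocompact E ⊓ 𝓟 S, u w' - ε * φ w' ≤ u w - ε * φ w := by
    obtain ⟨K, hKc, hKS⟩ := hK (C / ε)
    filter_upwards [mem_inf_of_left hKc.compl_mem_cocompact,
      mem_inf_of_right (mem_principal_self S)] with w' hw'K hw'S
    have hCφ : C < φ w' * ε := (div_lt_iff₀ hε).1 (not_le.1 (mt (hKS w' hw'S) hw'K))
    linarith [hC w' hw'S]
  obtain ⟨m, hmS, hm⟩ := (hu.sub (hφ.const_mul ε)).exists_isMaxOn' hS hw hfar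
  refine hmax ε hε m hmS ?_ hm
  have hle : u w - ε * φ w ≤ u m - ε * φ m := hm hw
  have := mul_nonneg hε.le (hφ₀ m hmS)
  linarith

/-! ### The Laplacian on `Sol(p,q)` -/

section SolLap

variable {u v : ℝ × ℝ × ℝ → ℝ} {w : ℝ × ℝ × ℝ} (p q a : ℝ)

theorem solLap_add (hu : ContDiff ℝ 2 u) (hv : ContDiff ℝ 2 v) :
    solLap p q a (fun w => u w + v w) w = solLap p q a u w + solLap p q a v w := by
  simp only [solLap]
  rw [iteratedDeriv_fun_add (by fun_prop) (by fun_prop),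
    iteratedDeriv_fun_add (by fun_prop) (by fun_prop),
    iteratedDeriv_fun_add (by fun_prop) (by fun_prop),
    deriv_fun_add (ContDiff.differentiable (by fun_prop) two_ne_zero _)
      (ContDiff.differentiable (by fun_prop) two_ne_zero _)]
  ring

theorem solLap_const_mul (c : ℝ) :
    solLap p q a (fun w => c * u w) w = c * solLap p q a u w := by
  simp only [solLap, iteratedDeriv_const_mul_field, deriv_const_mul_field]
  ring

theorem solLap_comp_const_add_fst (c : ℝ) :
    solLap p q a (fun w => u (c + w.1, w.2)) w = solLap p q a u (c + w.1, w.2) := by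
  simp only [solLap]
  rw [iteratedDeriv_comp_const_add 2 (fun t => u (t, w.2.1, w.2.2))]

theorem solLap_comp_const_sub_fst (c : ℝ) :
    solLap p q a (fun w => u (c - w.1, w.2)) w = solLap p q a u (c - w.1, w.2) := by
  simp only [solLap]
  rw [iteratedDeriv_comp_const_sub 2 (fun t => u (t, w.2.1, w.2.2))]
  simp

theorem solLap_le_of_isLocalMax_sub (hu : ContDiff ℝ 2 u) (hv : ContDiff ℝ 2 v)
    (h : IsLocalMax (fun w => u w - v w) w) : solLap p q a u w ≤ solLap p q a v w := by
  have hx := h.comp_continuous (b := w.1) (g := fun t => (t, w.2.1, w.2.2)) (by fun_prop)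
  have hy := h.comp_continuous (b := w.2.1) (g := fun t => (w.1, t, w.2.2)) (by fun_prop)
  have hz := h.comp_continuous (b := w.2.2) (g := fun t => (w.1, w.2.1, t)) (by fun_prop)
  have hxx := iteratedDeriv_two_le_of_isLocalMax_sub (by fun_prop) (by fun_prop) hx
  have hyy := iteratedDeriv_two_le_of_isLocalMax_sub (by fun_prop) (by fun_prop) hy
  have hzz := iteratedDeriv_two_le_of_isLocalMax_sub (by fun_prop) (by fun_prop) hz
  have hd := deriv_eq_of_isLocalMax_sub (ContDiff.differentiable (by fun_prop) two_ne_zero _)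
    (ContDiff.differentiable (by fun_prop) two_ne_zero _) hz
  simp only [solLap, hd]
  gcongr

end SolLap

/-- The symmetry of the family `Sol(p,q)` which exchanges the two horizontal coordinates and
reverses the vertical one; it carries drift `a` on `Sol(p,q)` to drift `-a` on `Sol(q,p)`. -/
def solSwap (w : ℝ × ℝ × ℝ) : ℝ × ℝ × ℝ := (w.2.1, w.1, -w.2.2)

@[fun_prop]
theorem contDiff_solSwap {n : WithTop ℕ∞} : ContDiff ℝ n solSwap := by
  unfold solSwap
  fun_prop

@[simp]
theorem solSwap_solSwap (w : ℝ × ℝ × ℝ) : solSwap (solSwap w) = w := by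
  simp [solSwap]

theorem solLap_comp_solSwap (p q a : ℝ) (f : ℝ × ℝ × ℝ → ℝ) (w : ℝ × ℝ × ℝ) :
    solLap p q a (fun w => f (solSwap w)) w = solLap q p (-a) f (solSwap w) := by
  simp only [solLap, solSwap]
  rw [iteratedDeriv_comp_neg 2 (fun r => f (w.2.1, w.1, r)),
    deriv_comp_neg (fun r => f (w.2.1, w.1, r))]
  simp only [even_two, Even.neg_pow, one_pow, one_smul, mul_neg, neg_neg]
  ring

/-- The projection of `Sol(p,q)`, as the horocyclic product of `H(p)` and `H(q)`, onto its first
factor; the projection onto the second factor is `fun w => solProj (solSwap w)`. -/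
def solProj (w : ℝ × ℝ × ℝ) : ℝ × ℝ := (w.1, w.2.2)

@[fun_prop]
theorem contDiff_solProj {n : WithTop ℕ∞} : ContDiff ℝ n solProj := by
  unfold solProj
  fun_prop

theorem solLap_comp_solProj (p q a : ℝ) (g : ℝ × ℝ → ℝ) (w : ℝ × ℝ × ℝ) :
    solLap p q a (fun w => g (solProj w)) w = hypLap p a g (solProj w) := by
  simp [solLap, hypLap, solProj, iteratedDeriv_const]

/-! ### The Laplacian on the hyperbolic plane -/

theorem hypLap_const_mul (r b c : ℝ) (g : ℝ × ℝ → ℝ) (w : ℝ × ℝ) :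
    hypLap r b (fun w => c * g w) w = c * hypLap r b g w := by
  simp only [hypLap, iteratedDeriv_const_mul_field, deriv_const_mul_field]
  ring

theorem hypLap_le_of_isLocalMax_sub (r b : ℝ) {u v : ℝ × ℝ → ℝ} {w : ℝ × ℝ}
    (hu : ContDiff ℝ 2 u) (hv : ContDiff ℝ 2 v) (h : IsLocalMax (fun w => u w - v w) w) :
    hypLap r b u w ≤ hypLap r b v w := by
  have hmax : IsLocalMax (fun v' => u (solProj v') - v (solProj v')) (w.1, 0, w.2) :=
    IsLocalMax.comp_continuous (f := fun w => u w - v w) (g := solProj) (b := (w.1, 0, w.2)) h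
      (contDiff_solProj (n := 0)).continuous.continuousAt
  have hlift := solLap_le_of_isLocalMax_sub r 0 b (by fun_prop) (by fun_prop) hmax
  rwa [solLap_comp_solProj, solLap_comp_solProj] at hlift

theorem hypLap_height_add_profile {F F' F'' : ℝ → ℝ} (hF : ∀ t, HasDerivAt F (F' t) t)
    (hF' : ∀ t, HasDerivAt F' (F'' t) t) (r b c k : ℝ) (w : ℝ × ℝ) {T : ℝ}
    (hT : (c + r * w.1) * exp (-(r * w.2)) = T) :
    hypLap r b (fun w => k * w.2 + F ((c + r * w.1) * exp (-(r * w.2)))) w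
      = b * k + r / 2 * (r * ((1 + T ^ 2) * F'' T) + (r - 2 * b) * (T * F' T)) := by
  have hx : ∀ t, HasDerivAt (fun t => (c + r * t) * exp (-(r * w.2))) (r * exp (-(r * w.2))) t :=
    fun t => by
      simpa using (((hasDerivAt_id t).const_mul r).const_add c).mul_const (exp (-(r * w.2)))
  have hz : ∀ t, HasDerivAt (fun t => (c + r * w.1) * exp (-(r * t)))
      (-r * ((c + r * w.1) * exp (-(r * t)))) t := fun t =>
    (((hasDerivAt_id' t).const_mul r).fun_neg.exp.const_mul (c + r * w.1)).congr_deriv (by ring)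
  have hfx := fun t => ((hF _).comp t (hx t)).const_add (k * w.2)
  have hfz := fun t => ((hasDerivAt_id' t).const_mul k).fun_add ((hF _).comp t (hz t))
  have hfxx := ((hF' _).comp w.1 (hx w.1)).mul_const (r * exp (-(r * w.2)))
  have hfzz := (((hF' _).comp w.2 (hz w.2)).mul ((hz w.2).const_mul (-r))).const_add (k * 1)
  have hxx := iteratedDeriv_two_eq_of_hasDerivAt hfx hfxx
  have hzz := iteratedDeriv_two_eq_of_hasDerivAt hfz hfzz
  have hd := (hfz w.2).deriv
  simp only [Function.comp_def] at hxx hzz hd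
  have hexp : exp (2 * r * w.2) * (exp (-(r * w.2)) * exp (-(r * w.2))) = 1 := by
    rw [← exp_add, ← exp_add, ← exp_zero]
    ring_nf
  rw [hypLap, hxx, hzz, hd, hT]
  linear_combination (1 / 2) * r ^ 2 * F'' T * hexp

/-! ### A barrier on the half-plane -/

/-- A proper positive function on the half-plane `{x ≥ 0}` of `H(r)`, strictly superharmonic for
zero drift. The profile `2 arsinh T` would make it harmonic, and doubling the argument makes the
superharmonicity strict; the shift by `1` makes it bounded below up to the line `{x = 0}`. -/
noncomputable def hypBarrier (r : ℝ) (w : ℝ × ℝ) : ℝ :=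
  r * w.2 + 2 * arsinh (2 * ((1 + r * w.1) * exp (-(r * w.2))))

@[fun_prop]
theorem contDiff_hypBarrier (r : ℝ) {n : WithTop ℕ∞} : ContDiff ℝ n (hypBarrier r) := by
  unfold hypBarrier
  fun_prop

section HypBarrier

variable {r : ℝ} {w : ℝ × ℝ}

theorem hypLap_hypBarrier_neg (hr : 0 < r) (hw : 0 ≤ w.1) : hypLap r 0 (hypBarrier r) w < 0 := by
  have hF : ∀ t, HasDerivAt (fun t => 2 * arsinh (2 * t)) (4 * (√(1 + (2 * t) ^ 2))⁻¹) t :=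
    fun t => ((((hasDerivAt_id' t).const_mul 2).arsinh).const_mul 2).congr_deriv (by
      simp only [smul_eq_mul]
      ring)
  have hF' : ∀ t, HasDerivAt (fun t => 4 * (√(1 + (2 * t) ^ 2))⁻¹)
      (-16 * t / ((1 + (2 * t) ^ 2) * √(1 + (2 * t) ^ 2))) t := fun t => by
    have hpos : 0 < 1 + (2 * t) ^ 2 := by positivity
    refine (((((((hasDerivAt_id' t).const_mul 2).fun_pow 2).const_add 1).sqrt hpos.ne').fun_inv
      (sqrt_pos.2 hpos).ne').const_mul 4).congr_deriv ?_
    rw [sq_sqrt hpos.le]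
    field_simp
    norm_num
    ring
  set T := (1 + r * w.1) * exp (-(r * w.2)) with hT
  have hT₀ : 0 < T := by positivity
  have hlap : hypLap r 0 (hypBarrier r) w
      = -(6 * r ^ 2 * T / ((1 + (2 * T) ^ 2) * √(1 + (2 * T) ^ 2))) := by
    refine (hypLap_height_add_profile hF hF' r 0 1 r w hT.symm).trans ?_
    field_simp
    ring
  rw [hlap, neg_lt_zero]
  positivity

theorem two_mul_log_sub_le_hypBarrier (hr : 0 ≤ r) (hw : 0 ≤ w.1) :
    2 * log (1 + r * w.1) - r * w.2 ≤ hypBarrier r w := by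
  have hX : 0 < 1 + r * w.1 := by positivity
  have hT : 0 < (1 + r * w.1) * exp (-(r * w.2)) := by positivity
  calc 2 * log (1 + r * w.1) - r * w.2
      = r * w.2 + 2 * log ((1 + r * w.1) * exp (-(r * w.2))) := by
        rw [log_mul hX.ne' (exp_pos _).ne', log_exp]
        ring
    _ ≤ r * w.2 + 2 * arsinh ((1 + r * w.1) * exp (-(r * w.2))) := by
        gcongr
        exact log_le_arsinh hT
    _ ≤ hypBarrier r w := by
        unfold hypBarrier
        gcongr r * w.2 + 2 * arsinh ?_
        exact le_mul_of_one_le_left hT.le one_le_two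

theorem mul_snd_le_hypBarrier (hr : 0 ≤ r) (hw : 0 ≤ w.1) : r * w.2 ≤ hypBarrier r w :=
  le_add_of_nonneg_right (mul_nonneg two_pos.le (arsinh_nonneg_iff.2 (by positivity)))

theorem hypBarrier_nonneg (hr : 0 ≤ r) (hw : 0 ≤ w.1) : 0 ≤ hypBarrier r w := by
  have hlog : 0 ≤ log (1 + r * w.1) := log_nonneg (le_add_of_nonneg_right (by positivity))
  linarith [two_mul_log_sub_le_hypBarrier hr hw, mul_snd_le_hypBarrier hr hw]

theorem fst_le_of_hypBarrier_le (hr : 0 < r) (hw : 0 ≤ w.1) {M : ℝ} (hM : hypBarrier r w ≤ M) :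
    w.1 ≤ exp M / r := by
  have hlog : log (1 + r * w.1) ≤ M := by
    linarith [two_mul_log_sub_le_hypBarrier hr.le hw, mul_snd_le_hypBarrier hr.le hw]
  rw [log_le_iff_le_exp (by positivity)] at hlog
  exact (le_div_iff₀ hr).2 (by linarith)

theorem abs_snd_le_of_hypBarrier_le (hr : 0 < r) (hw : 0 ≤ w.1) {M : ℝ}
    (hM : hypBarrier r w ≤ M) : |w.2| ≤ M / r := by
  have hlog : 0 ≤ log (1 + r * w.1) := log_nonneg (le_add_of_nonneg_right (by positivity))
  have habs : |r * w.2| ≤ M := abs_le.2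
    ⟨by linarith [two_mul_log_sub_le_hypBarrier hr.le hw],
      (mul_snd_le_hypBarrier hr.le hw).trans hM⟩
  rw [abs_mul, abs_of_pos hr] at habs
  exact (le_div_iff₀' hr).2 habs

end HypBarrier

theorem nonpos_of_hypLap_nonneg_of_halfPlane {r : ℝ} (hr : 0 < r) {u : ℝ × ℝ → ℝ} {C : ℝ}
    (hu : ContDiff ℝ 2 u) (hC : ∀ w, 0 ≤ w.1 → u w ≤ C) (hlap : ∀ w, 0 < w.1 → 0 ≤ hypLap r 0 u w)
    (hface : ∀ z, u (0, z) ≤ 0) {w : ℝ × ℝ} (hw : 0 ≤ w.1) : u w ≤ 0 := by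
  refine nonpos_of_proper_barrier (S := {w : ℝ × ℝ | 0 ≤ w.1})
    (isClosed_le continuous_const continuous_fst) hu.continuous.continuousOn
    (contDiff_hypBarrier r (n := 2)).continuous.continuousOn hC
    (fun w hw => hypBarrier_nonneg hr.le hw) (fun M => ?_) ?_ hw
  · exact ⟨Icc 0 (exp M / r) ×ˢ Icc (-(M / r)) (M / r), isCompact_Icc.prod isCompact_Icc,
      fun w hw hM => ⟨⟨hw, fst_le_of_hypBarrier_le hr hw hM⟩,
        abs_le.1 (abs_snd_le_of_hypBarrier_le hr hw hM)⟩⟩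
  · rintro ε hε ⟨x, z⟩ (hx : 0 ≤ x) hpos hmax
    have hx' : 0 < x := hx.lt_of_ne (by rintro rfl; exact (hface z).not_gt hpos)
    have hle := hypLap_le_of_isLocalMax_sub r 0 hu (by fun_prop) <| hmax.isLocalMax <| by
      filter_upwards [(isOpen_lt continuous_const continuous_fst).mem_nhds hx'] with w hw
        using le_of_lt hw
    rw [hypLap_const_mul] at hle
    exact ((hlap _ hx').trans hle).not_gt
      (mul_neg_of_pos_of_neg hε (hypLap_hypBarrier_neg hr hx))

theorem nonpos_of_solLap_nonneg_of_quadrant {p q : ℝ} (hp : 0 < p) (hq : 0 < q)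
    {u : ℝ × ℝ × ℝ → ℝ} {C : ℝ} (hu : ContDiff ℝ 2 u)
    (hC : ∀ w, 0 ≤ w.1 → 0 ≤ w.2.1 → u w ≤ C)
    (hlap : ∀ w, 0 < w.1 → 0 < w.2.1 → 0 ≤ solLap p q 0 u w)
    (hxface : ∀ y z, u (0, y, z) ≤ 0) (hyface : ∀ x z, u (x, 0, z) ≤ 0)
    {w : ℝ × ℝ × ℝ} (hx : 0 ≤ w.1) (hy : 0 ≤ w.2.1) : u w ≤ 0 := by
  have hφ : ContDiff ℝ 2
      (fun w => hypBarrier p (solProj w) + hypBarrier q (solProj (solSwap w))) := by fun_prop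
  refine nonpos_of_proper_barrier (S := {w : ℝ × ℝ × ℝ | 0 ≤ w.1 ∧ 0 ≤ w.2.1})
    ((isClosed_le continuous_const continuous_fst).inter
      (isClosed_le continuous_const (continuous_fst.comp continuous_snd)))
    hu.continuous.continuousOn hφ.continuous.continuousOn (fun w hw => hC w hw.1 hw.2)
    (fun w hw => add_nonneg (hypBarrier_nonneg hp.le hw.1) (hypBarrier_nonneg hq.le hw.2))
    (fun M => ?_) ?_ ⟨hx, hy⟩
  · refine ⟨Icc 0 (exp M / p) ×ˢ Icc 0 (exp M / q) ×ˢ Icc (-(M / p)) (M / p),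
      isCompact_Icc.prod (isCompact_Icc.prod isCompact_Icc), fun w ⟨hx, hy⟩ hM => ?_⟩
    have hxp : 0 ≤ (solProj w).1 := hx
    have hyq : 0 ≤ (solProj (solSwap w)).1 := hy
    have hMp := (le_add_of_nonneg_right (hypBarrier_nonneg hq.le hyq)).trans hM
    have hMq := (le_add_of_nonneg_left (hypBarrier_nonneg hp.le hxp)).trans hM
    exact ⟨⟨hx, fst_le_of_hypBarrier_le hp hxp hMp⟩, ⟨hy, fst_le_of_hypBarrier_le hq hyq hMq⟩,
      abs_le.1 (abs_snd_le_of_hypBarrier_le hp hxp hMp)⟩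
  · rintro ε hε ⟨x, y, z⟩ ⟨hx : 0 ≤ x, hy : 0 ≤ y⟩ hpos hmax
    have hx' : 0 < x := hx.lt_of_ne (by rintro rfl; exact (hxface y z).not_gt hpos)
    have hy' : 0 < y := hy.lt_of_ne (by rintro rfl; exact (hyface x z).not_gt hpos)
    have hle := solLap_le_of_isLocalMax_sub p q 0 hu (contDiff_const.mul hφ) <|
      hmax.isLocalMax <| by
        filter_upwards [prod_mem_nhds (Ioi_mem_nhds hx')
          (prod_mem_nhds (Ioi_mem_nhds hy') univ_mem)] with w hw
          using ⟨le_of_lt hw.1, le_of_lt hw.2.1⟩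
    rw [solLap_const_mul, solLap_add _ _ _ (by fun_prop) (by fun_prop), solLap_comp_solProj,
      solLap_comp_solSwap p q 0 fun w => hypBarrier q (solProj w), solLap_comp_solProj,
      neg_zero] at hle
    exact ((hlap _ hx' hy').trans hle).not_gt (mul_neg_of_pos_of_neg hε
      (add_neg (hypLap_hypBarrier_neg hp hx) (hypLap_hypBarrier_neg hq hy)))

/-! ### Bounded harmonic functions -/

/-- The bounded `C²` harmonic functions of the Laplacian with drift `a` on `Sol(p,q)`, on which the
weak Liouville property bears. -/
structure IsBddSolHarmonic (p q a : ℝ) (h : ℝ × ℝ × ℝ → ℝ) : Prop where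
  contDiff : ContDiff ℝ 2 h
  bdd : ∃ C : ℝ, ∀ w, |h w| ≤ C
  harmonic : ∀ w, solLap p q a h w = 0

namespace IsBddSolHarmonic

section Symmetries

variable {p q a : ℝ} {f h : ℝ × ℝ × ℝ → ℝ}

theorem add (hf : IsBddSolHarmonic p q a f) (hh : IsBddSolHarmonic p q a h) :
    IsBddSolHarmonic p q a (fun w => f w + h w) where
  contDiff := hf.contDiff.add hh.contDiff
  bdd := by
    obtain ⟨A, hA⟩ := hf.bdd
    obtain ⟨B, hB⟩ := hh.bdd
    exact ⟨A + B, fun w => (abs_add_le _ _).trans (add_le_add (hA w) (hB w))⟩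
  harmonic w := by
    rw [solLap_add p q a hf.contDiff hh.contDiff, hf.harmonic, hh.harmonic, add_zero]

theorem neg (hh : IsBddSolHarmonic p q a h) : IsBddSolHarmonic p q a (fun w => -h w) where
  contDiff := hh.contDiff.neg
  bdd := by simpa only [abs_neg] using hh.bdd
  harmonic w := by simpa [hh.harmonic w] using solLap_const_mul (u := h) (w := w) p q a (-1)

theorem comp_const_add_fst (hh : IsBddSolHarmonic p q a h) (c : ℝ) :
    IsBddSolHarmonic p q a (fun w => h (c + w.1, w.2)) where
  contDiff := hh.contDiff.comp (by fun_prop)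
  bdd := hh.bdd.imp fun C hC w => hC _
  harmonic w := by rw [solLap_comp_const_add_fst, hh.harmonic]

theorem comp_const_sub_fst (hh : IsBddSolHarmonic p q a h) (c : ℝ) :
    IsBddSolHarmonic p q a (fun w => h (c - w.1, w.2)) where
  contDiff := hh.contDiff.comp (by fun_prop)
  bdd := hh.bdd.imp fun C hC w => hC _
  harmonic w := by rw [solLap_comp_const_sub_fst, hh.harmonic]

theorem comp_solSwap (hh : IsBddSolHarmonic q p (-a) h) :
    IsBddSolHarmonic p q a (fun w => h (solSwap w)) where
  contDiff := hh.contDiff.comp contDiff_solSwap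
  bdd := hh.bdd.imp fun C hC w => hC _
  harmonic w := by rw [solLap_comp_solSwap, hh.harmonic]

theorem sub_reflection_fst (hh : IsBddSolHarmonic p q a h) (c : ℝ) :
    IsBddSolHarmonic p q a (fun w => h (c + w.1, w.2) - h (c - w.1, w.2)) := by
  simpa only [sub_eq_add_neg] using (hh.comp_const_add_fst c).add (hh.comp_const_sub_fst c).neg

theorem sub_reflection_snd (hh : IsBddSolHarmonic p q a h) (d : ℝ) :
    IsBddSolHarmonic p q a
      (fun w => h (w.1, d + w.2.1, w.2.2) - h (w.1, d - w.2.1, w.2.2)) := by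
  have hswap : IsBddSolHarmonic q p (-a) (fun w => h (solSwap w)) :=
    comp_solSwap (by rwa [neg_neg])
  simpa [solSwap] using (hswap.sub_reflection_fst d).comp_solSwap

end Symmetries

section ZeroDrift

variable {p q : ℝ} {h : ℝ × ℝ × ℝ → ℝ}

theorem mixed_difference_le (hh : IsBddSolHarmonic p q 0 h) (hp : 0 < p) (hq : 0 < q) (c d : ℝ)
    {x y : ℝ} (hx : 0 ≤ x) (hy : 0 ≤ y) (z : ℝ) :
    h (c + x, d + y, z) - h (c - x, d + y, z) ≤ h (c + x, d - y, z) - h (c - x, d - y, z) := by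
  have hu := (hh.sub_reflection_fst c).sub_reflection_snd d
  obtain ⟨C, hC⟩ := hu.bdd
  exact sub_nonpos.1 <| nonpos_of_solLap_nonneg_of_quadrant (w := (x, y, z)) hp hq hu.contDiff
    (fun w _ _ => (le_abs_self _).trans (hC w)) (fun w _ _ => (hu.harmonic w).ge)
    (fun y z => by simp) (fun x z => by simp) hx hy

theorem mixed_difference_eq (hh : IsBddSolHarmonic p q 0 h) (hp : 0 < p) (hq : 0 < q)
    (c d x y z : ℝ) :
    h (c + x, d + y, z) - h (c - x, d + y, z) = h (c + x, d - y, z) - h (c - x, d - y, z) := by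
  wlog hx : 0 ≤ x generalizing x
  · have := this (-x) (by linarith)
    rw [sub_neg_eq_add, ← sub_eq_add_neg] at this
    linarith
  wlog hy : 0 ≤ y generalizing y
  · have := this (-y) (by linarith)
    rw [sub_neg_eq_add, ← sub_eq_add_neg] at this
    exact this.symm
  have hle := hh.mixed_difference_le hp hq c d hx hy z
  have hge := hh.neg.mixed_difference_le hp hq c d hx hy z
  linarith

theorem sub_reflection_fst_indep_snd (hh : IsBddSolHarmonic p q 0 h) (hp : 0 < p) (hq : 0 < q)
    (c x y y' z : ℝ) :
    h (c + x, y, z) - h (c - x, y, z) = h (c + x, y', z) - h (c - x, y', z) :=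
  eq_of_forall_reflection (f := fun y => h (c + x, y, z) - h (c - x, y, z))
    (fun d y => hh.mixed_difference_eq hp hq c d x y z) y y'

theorem le_reflection_fst (hh : IsBddSolHarmonic p q 0 h) (hp : 0 < p) (hq : 0 < q) (c : ℝ)
    {x : ℝ} (hx : 0 ≤ x) (y z : ℝ) : h (c + x, y, z) ≤ h (c - x, y, z) := by
  have hu := hh.sub_reflection_fst c
  set g : ℝ × ℝ → ℝ := fun v => h (c + v.1, y, v.2) - h (c - v.1, y, v.2) with hg
  have hlift : (fun w => h (c + w.1, w.2) - h (c - w.1, w.2)) = fun w => g (solProj w) :=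
    funext fun w => hh.sub_reflection_fst_indep_snd hp hq c w.1 w.2.1 y w.2.2
  rw [hlift] at hu
  have hgc : ContDiff ℝ 2 g := by
    have := hh.contDiff
    fun_prop
  obtain ⟨C, hC⟩ := hu.bdd
  refine sub_nonpos.1 (nonpos_of_hypLap_nonneg_of_halfPlane (w := (x, z)) hp hgc
    (fun v _ => (le_abs_self _).trans (hC (v.1, 0, v.2))) (fun v _ => ?_) (fun z => ?_) hx)
  · exact (solLap_comp_solProj p q 0 g (v.1, 0, v.2)).symm.trans (hu.harmonic _) |>.ge
  · simp [hg]

theorem eq_of_snd_eq (hh : IsBddSolHarmonic p q 0 h) (hp : 0 < p) (hq : 0 < q) (x x' : ℝ)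
    (v : ℝ × ℝ) : h (x, v) = h (x', v) := by
  refine eq_of_forall_reflection (f := fun x => h (x, v)) (fun c t => ?_) x x'
  wlog ht : 0 ≤ t generalizing t
  · simpa [← sub_eq_add_neg] using (this (-t) (by linarith)).symm
  exact le_antisymm (hh.le_reflection_fst hp hq c ht v.1 v.2)
    (neg_le_neg_iff.1 (hh.neg.le_reflection_fst hp hq c ht v.1 v.2))

theorem eq_const (hh : IsBddSolHarmonic p q 0 h) (hp : 0 < p) (hq : 0 < q)
    (w w' : ℝ × ℝ × ℝ) : h w = h w' := by
  have hswap : IsBddSolHarmonic q p 0 (fun w => h (solSwap w)) :=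
    comp_solSwap (by rwa [neg_zero])
  have hvert : ∀ w : ℝ × ℝ × ℝ, h w = h (0, 0, w.2.2) := fun w =>
    calc h w = h (0, w.2) := hh.eq_of_snd_eq hp hq w.1 0 w.2
      _ = h (0, 0, w.2.2) := by
        simpa [solSwap] using hswap.eq_of_snd_eq hq hp w.2.1 0 (0, -w.2.2)
  have hsecond : ∀ z, iteratedDeriv 2 (fun t => h (0, 0, t)) z = 0 := fun z => by
    have hz := hh.harmonic (0, 0, z)
    rw [funext hvert] at hz
    simpa [solLap, iteratedDeriv_const] using hz
  obtain ⟨C, hC⟩ := hh.bdd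
  rw [hvert w, hvert w']
  exact eq_of_iteratedDeriv_two_eq_zero_of_abs_le (hh.contDiff.comp (by fun_prop)) hsecond
    (fun t => hC (0, 0, t)) w.2.2 w'.2.2

end ZeroDrift

end IsBddSolHarmonic

/-! ### Nonconstant bounded harmonic functions -/

/-- The centred distribution function, up to normalisation, of the Student-type density
`(1 + t²)^(-s)`; it is the profile of the bounded harmonic functions with nonzero drift. -/
noncomputable def studentIntegral (s x : ℝ) : ℝ := ∫ t in (0 : ℝ)..x, (1 + t ^ 2) ^ (-s)

section StudentIntegral

variable (s : ℝ)

theorem contDiff_one_add_sq_rpow {n : WithTop ℕ∞} :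
    ContDiff ℝ n (fun t : ℝ => (1 + t ^ 2) ^ (-s)) :=
  ContDiff.rpow_const_of_ne (by fun_prop) fun t => by positivity

theorem hasDerivAt_one_add_sq_rpow (x : ℝ) :
    HasDerivAt (fun t : ℝ => (1 + t ^ 2) ^ (-s)) (-2 * s * x * (1 + x ^ 2) ^ (-s) / (1 + x ^ 2))
      x := by
  have hpos : 1 + x ^ 2 ≠ 0 := by positivity
  refine ((((hasDerivAt_id' x).fun_pow 2).const_add 1).rpow_const (p := -s)
    (Or.inl hpos)).congr_deriv ?_
  rw [rpow_sub_one hpos]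
  ring

theorem hasDerivAt_studentIntegral (x : ℝ) :
    HasDerivAt (studentIntegral s) ((1 + x ^ 2) ^ (-s)) x :=
  ((contDiff_one_add_sq_rpow s (n := 0)).continuous.integral_hasStrictDerivAt 0 x).hasDerivAt

theorem contDiff_studentIntegral : ContDiff ℝ 2 (studentIntegral s) := by
  rw [← one_add_one_eq_two, contDiff_succ_iff_deriv]
  refine ⟨fun x => (hasDerivAt_studentIntegral s x).differentiableAt, by simp, ?_⟩
  rw [funext fun x => (hasDerivAt_studentIntegral s x).deriv]
  exact contDiff_one_add_sq_rpow s

theorem studentIntegral_zero : studentIntegral s 0 = 0 :=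
  intervalIntegral.integral_same

theorem studentIntegral_one_pos : 0 < studentIntegral s 1 :=
  intervalIntegral.intervalIntegral_pos_of_pos
    ((contDiff_one_add_sq_rpow s (n := 0)).continuous.intervalIntegrable _ _)
    (fun t => by positivity) one_pos

variable {s}

theorem exists_abs_studentIntegral_le (hs : 1 / 2 < s) : ∃ C, ∀ x, |studentIntegral s x| ≤ C := by
  have hint : MeasureTheory.Integrable fun t : ℝ => (1 + t ^ 2) ^ (-s) := by
    have := integrable_rpow_neg_one_add_norm_sq (E := ℝ) (μ := MeasureTheory.volume) (r := 2 * s)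
      (by rw [Module.finrank_self]; push_cast; linarith)
    simpa [neg_div] using this
  exact ⟨∫ t : ℝ, ‖(1 + t ^ 2) ^ (-s)‖, fun x =>
    intervalIntegral.norm_integral_le_integral_norm_uIoc.trans
      (MeasureTheory.setIntegral_le_integral hint.norm (.of_forall fun t => norm_nonneg _))⟩

end StudentIntegral

theorem hypLap_studentIntegral {r : ℝ} (hr : r ≠ 0) (b : ℝ) (w : ℝ × ℝ) :
    hypLap r b (fun w => studentIntegral (1 / 2 - b / r) (r * w.1 * exp (-(r * w.2)))) w = 0 := by
  have hprofile := hypLap_height_add_profile (hasDerivAt_studentIntegral (1 / 2 - b / r))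
    (hasDerivAt_one_add_sq_rpow (1 / 2 - b / r)) r b 0 0 w rfl
  simp only [zero_mul, zero_add, mul_zero] at hprofile
  rw [hprofile]
  field_simp
  ring

theorem exists_isBddSolHarmonic_ne_of_neg {p : ℝ} (hp : 0 < p) (q : ℝ) {a : ℝ} (ha : a < 0) :
    ∃ h, IsBddSolHarmonic p q a h ∧ ∃ w w', h w ≠ h w' := by
  set s := 1 / 2 - a / p with hs
  have hs' : 1 / 2 < s := by linarith [div_neg_of_neg_of_pos ha hp]
  set g : ℝ × ℝ → ℝ := fun v => studentIntegral s (p * v.1 * exp (-(p * v.2))) with hg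
  refine ⟨fun w => g (solProj w), ⟨?_, ?_, fun w => ?_⟩, (p⁻¹, 0, 0), (0, 0, 0), ?_⟩
  · have := contDiff_studentIntegral s
    fun_prop
  · exact (exists_abs_studentIntegral_le hs').imp fun C hC w => hC _
  · rw [solLap_comp_solProj]
    exact hypLap_studentIntegral hp.ne' a _
  · simpa [hg, solProj, hp.ne', studentIntegral_zero] using (studentIntegral_one_pos s).ne'

theorem exists_isBddSolHarmonic_ne {p q a : ℝ} (hp : 0 < p) (hq : 0 < q) (ha : a ≠ 0) :
    ∃ h, IsBddSolHarmonic p q a h ∧ ∃ w w', h w ≠ h w' := by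
  rcases ha.lt_or_gt with hneg | hpos
  · exact exists_isBddSolHarmonic_ne_of_neg hp q hneg
  · obtain ⟨h, hh, w, w', hne⟩ := exists_isBddSolHarmonic_ne_of_neg hq p (neg_lt_zero.2 hpos)
    exact ⟨_, hh.comp_solSwap, solSwap w, solSwap w', by simpa only [solSwap_solSwap] using hne⟩

theorem weak_liouville_iff_zero_drift (p q a : ℝ) (hp : 0 < p) (hq : 0 < q) :
    (∀ h : ℝ × ℝ × ℝ → ℝ, ContDiff ℝ 2 h → (∃ C : ℝ, ∀ w, |h w| ≤ C) →
      (∀ w, solLap p q a h w = 0) → ∀ w w' : ℝ × ℝ × ℝ, h w = h w') ↔ a = 0 := by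
  constructor
  · intro liouville
    by_contra ha
    obtain ⟨h, hh, w, w', hne⟩ := exists_isBddSolHarmonic_ne hp hq ha
    exact hne (liouville h hh.contDiff hh.bdd hh.harmonic w w')
  · rintro rfl h hcont hbdd hharm
    exact IsBddSolHarmonic.eq_const ⟨hcont, hbdd, hharm⟩ hp hq
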